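/- arXiv:2309.09566 — 2 statements merged into one kernel-verified Lean document; each statement's English description precedes it below -/
import Mathlib

section
/- A relation R ⊆ ℕⁿ is synchronous if and only if there exists a first-order formula φ(x₁,…,xₙ) over the relational language having, for every regular set L ⊆ ℕ, one binary relation symbol D_L, such that R is exactly the set of n-tuples satisfying φ in the structure with domain ℕ in which D_L is interpreted as the relation {(x,y) ∈ ℕ × ℕ : y ≤ x and x − y ∈ L}. -/
/-!
Both sides of the equivalence are shown to be equivalent to a third, combinatorial property.
Call `a, b : ℕ` similar at level `N` if they are equal, or both at least `N` and congruent mod `N`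
(`Sim`). Adjoin the constant `0` to a tuple (`pt`) and call two tuples near at level `N` if all
their truncated differences are similar (`Near`). The property is that `R` is a union of nearness
classes for some `N > 0` (`NearInvariant`).

* Synchronous implies `NearInvariant` (`inv_of_sync`): between two consecutive entries of `x` the letters of
  `encVec x` are constant, so an automaton iterates one of its finitely many transition maps there,
  and the iterates of a self-map of a finite set depend only on the exponent up to similarity.
* `NearInvariant` implies synchronous (`sync_of_inv`): near tuples have encodings with the same left quotient
  (nearness survives appending a letter), and there are finitely many classes, so Myhill–Nerode
  applies.
* `NearInvariant` implies definable (`definable_of_inv`): the similarity classes are regular sets, `0` is the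
  least element, and `R` is a finite union of classes, each a finite intersection of conditions
  on differences.
* Definable implies `NearInvariant` (`exists_near_realize`): induction on formulas. For a quantifier, if two
  tuples are near at level `3 * N`, any new entry of the first is matched by an entry of the second
  so that the extended tuples are near at level `N` (`Near.exists_extension`); this is a
  back-and-forth argument.
-/

/-- Encoding of a tuple `x ∈ ℕⁿ` as a word of length `max_i x_i` over the alphabet
of vectors in `{0,1}ⁿ`: the `j`-th letter has `i`-th component `1` iff `j < x i`. -/
def encVec {n : ℕ} (x : Fin n → ℕ) : List (Fin n → Bool) :=
  (List.range (Finset.univ.sup x)).map (fun j i => decide (j < x i))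

/-- A relation `R ⊆ ℕⁿ` is synchronous if the language of encodings of its tuples
is regular. -/
def SyncRelN {n : ℕ} (R : Set (Fin n → ℕ)) : Prop :=
  Language.IsRegular {w : List (Fin n → Bool) | ∃ x ∈ R, encVec x = w}

/-- A set `E ⊆ ℕ` is regular if the corresponding unary language is regular. -/
def RegularSet (E : Set ℕ) : Prop :=
  Language.IsRegular {w : List Unit | w.length ∈ E}

/-- The relational first-order language with one binary relation symbol `D_L`
for every regular set `L ⊆ ℕ`. -/
def DLang : FirstOrder.Language where
  Functions := fun _ => Empty
  Relations := fun n => match n with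
    | 2 => {E : Set ℕ // RegularSet E}
    | _ => Empty

/-- The structure on ℕ in which `D_L` is interpreted as
`{(x, y) : y ≤ x ∧ x - y ∈ L}`. -/
instance : DLang.Structure ℕ where
  funMap := fun f _ => f.elim
  RelMap := fun {n} r x =>
    match n, r with
    | 2, E => x 1 ≤ x 0 ∧ x 0 - x 1 ∈ E.1

open FirstOrder FirstOrder.Language

/-! ### Similarity of natural numbers -/

/-- `a` and `b` are equal, or are both at least `N` and congruent modulo `N`
(see `sim_iff`). -/
def Sim (N a b : ℕ) : Prop := min a N = min b N ∧ a ≡ b [MOD N]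

theorem Sim.refl (N a : ℕ) : Sim N a a := ⟨rfl, Nat.ModEq.refl a⟩

theorem Sim.symm {N a b : ℕ} (h : Sim N a b) : Sim N b a := ⟨h.1.symm, h.2.symm⟩

theorem sim_iff {N a b : ℕ} : Sim N a b ↔ a = b ∨ (N ≤ a ∧ N ≤ b ∧ a ≡ b [MOD N]) := by
  unfold Sim
  constructor
  · rintro ⟨h, h'⟩
    by_cases hN : N ≤ a ∧ N ≤ b
    · exact Or.inr ⟨hN.1, hN.2, h'⟩
    · left; omega
  · rintro (rfl | ⟨h1, h2, h3⟩)
    · exact ⟨rfl, Nat.ModEq.refl a⟩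
    · exact ⟨by omega, h3⟩

theorem Sim.add {N a b c d : ℕ} (h : Sim N a b) (h' : Sim N c d) : Sim N (a + c) (b + d) := by
  refine ⟨?_, h.2.add h'.2⟩
  have := h.1
  have := h'.1
  omega

theorem Sim.of_dvd {N M a b : ℕ} (hM : 0 < M) (hd : N ∣ M) (h : Sim M a b) : Sim N a b := by
  refine ⟨?_, h.2.of_dvd hd⟩
  have := h.1
  have := Nat.le_of_dvd hM hd
  omega

theorem Sim.eq_zero_iff {N a b : ℕ} (hN : 0 < N) (h : Sim N a b) : a = 0 ↔ b = 0 := by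
  have := h.1
  omega

/-- A point splitting an interval of length `g` can be transferred to an interval of similar
length `h`: the two parts of the second interval are similar to those of the first. -/
theorem Sim.exists_split {N g h s : ℕ} (hN : 0 < N) (H : Sim (3 * N) g h) (hs : s ≤ g) :
    ∃ t ≤ h, Sim N s t ∧ Sim N (g - s) (h - t) := by
  rcases sim_iff.1 H with rfl | ⟨hg, hh, hm⟩
  · exact ⟨s, hs, Sim.refl _ _, Sim.refl _ _⟩
  have hm' : g ≡ h [MOD N] := hm.of_dvd (Dvd.intro_left 3 rfl)
  -- the position is kept relative to the closer end, and modulo `N` when both ends are far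
  by_cases h1 : s < N
  · refine ⟨s, by omega, Sim.refl _ _, sim_iff.2 (Or.inr ⟨by omega, by omega, ?_⟩)⟩
    exact Nat.ModEq.add_right_cancel' s
      (by rwa [Nat.sub_add_cancel hs, Nat.sub_add_cancel (by omega)])
  by_cases h2 : g - s < N
  · refine ⟨h - (g - s), by omega, sim_iff.2 (Or.inr ⟨by omega, by omega, ?_⟩), ?_⟩
    · refine Nat.ModEq.add_right_cancel' (g - s) ?_
      rwa [Nat.sub_add_cancel (by omega), Nat.add_sub_cancel' hs]
    · rw [Nat.sub_sub_self (by omega)]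
      exact Sim.refl _ _
  · have hlt := Nat.mod_lt s hN
    have hst : s ≡ N + s % N [MOD N] := by simp [Nat.ModEq]
    refine ⟨N + s % N, by omega, sim_iff.2 (Or.inr ⟨by omega, by omega, hst⟩),
      sim_iff.2 (Or.inr ⟨by omega, by omega, ?_⟩)⟩
    refine Nat.ModEq.add_left_cancel hst ?_
    rwa [Nat.add_sub_cancel' hs, Nat.add_sub_cancel' (by omega)]

/-- For `N > 0`, the similarity class of `a` as an element of a finite type. -/
def simCode (N : ℕ) (hN : 0 < N) (a : ℕ) : Fin (N + 1) × Fin N :=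
  (⟨min a N, by omega⟩, ⟨a % N, Nat.mod_lt _ hN⟩)

theorem simCode_eq_iff {N : ℕ} (hN : 0 < N) {a b : ℕ} :
    simCode N hN a = simCode N hN b ↔ Sim N a b := by
  simp [simCode, Sim, Nat.ModEq]

/-- The iterates of a self-map of a finite type depend on the exponent only up to similarity,
at a level uniform in the map: the level is at least every preperiod and divisible by every
period. -/
theorem exists_sim_iterate (σ : Type*) [Finite σ] :
    ∃ N > 0, ∀ f : σ → σ, ∀ a b, Sim N a b → f^[a] = f^[b] := by
  classical
  have := Fintype.ofFinite (σ → σ)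
  have key : ∀ f : σ → σ, ∃ i p, 0 < p ∧ f^[i + p] = f^[i] := by
    intro f
    obtain ⟨i, j, hij, h⟩ := Finite.exists_ne_map_eq_of_infinite (fun k : ℕ => f^[k])
    rcases lt_or_gt_of_ne hij with hlt | hlt
    · exact ⟨i, j - i, by omega, by rw [Nat.add_sub_cancel' hlt.le]; exact h.symm⟩
    · exact ⟨j, i - j, by omega, by rw [Nat.add_sub_cancel' hlt.le]; exact h⟩
  choose i p hp hi using key
  have hper : ∀ f a k, i f ≤ a → f^[a + p f * k] = f^[a] := by
    intro f a k ha
    induction k with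
    | zero => rfl
    | succ k ih =>
      have : a + p f * (k + 1) = (a - i f + p f * k) + (i f + p f) := by
        rw [Nat.mul_succ]; omega
      rw [this, Function.iterate_add, hi, ← Function.iterate_add, ← ih]
      congr 1
      omega
  have hpos : ∀ f, 0 < p f * (i f + 1) := fun f => Nat.mul_pos (hp f) (by omega)
  refine ⟨∏ f, p f * (i f + 1), Finset.prod_pos fun f _ => hpos f, fun f => ?_⟩
  have hdvd : p f * (i f + 1) ∣ ∏ f, p f * (i f + 1) :=
    Finset.dvd_prod_of_mem (fun f => p f * (i f + 1)) (Finset.mem_univ f)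
  have key : ∀ a b, a ≤ b → Sim (p f * (i f + 1)) a b → f^[a] = f^[b] := by
    intro a b hab h
    rcases sim_iff.1 h with rfl | ⟨ha, -, hm⟩
    · rfl
    obtain ⟨k, hk⟩ := (Nat.modEq_iff_dvd' hab).1 (hm.of_dvd (Dvd.intro _ rfl) : a ≡ b [MOD p f])
    have hia : i f ≤ a := by nlinarith [hp f]
    rw [← hper f a k hia, ← hk, Nat.add_sub_cancel' hab]
  intro a b h
  have h := h.of_dvd (Finset.prod_pos fun f _ => hpos f) hdvd
  rcases le_total a b with hab | hab
  · exact key a b hab h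
  · exact (key b a hab h.symm).symm

/-! ### Near tuples -/

/-- All truncated differences of entries are similar. For `N > 0`, `0` is similar only to
itself, so this forces the entries of `X` and `Y` to be ordered in the same way. -/
def Near {κ : Type*} (N : ℕ) (X Y : κ → ℕ) : Prop := ∀ k l, Sim N (X k - X l) (Y k - Y l)

/-- The tuple `x` with an additional entry `0`, at index `none`. -/
def pt {ι : Type*} (x : ι → ℕ) : Option ι → ℕ := fun o => o.elim 0 x

@[simp] theorem pt_none {ι : Type*} (x : ι → ℕ) : pt x none = 0 := rfl

@[simp] theorem pt_some {ι : Type*} (x : ι → ℕ) (i : ι) : pt x (some i) = x i := rfl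

theorem Near.symm {κ : Type*} {N : ℕ} {X Y : κ → ℕ} (h : Near N X Y) : Near N Y X :=
  fun k l => (h k l).symm

theorem Near.of_dvd {κ : Type*} {N M : ℕ} {X Y : κ → ℕ} (hM : 0 < M) (hd : N ∣ M)
    (h : Near M X Y) : Near N X Y :=
  fun k l => (h k l).of_dvd hM hd

theorem Near.le_iff {κ : Type*} {N : ℕ} {X Y : κ → ℕ} (hN : 0 < N) (h : Near N X Y) (k l : κ) :
    X k ≤ X l ↔ Y k ≤ Y l := by
  have := (h k l).eq_zero_iff hN
  omega

theorem Near.lt_iff {κ : Type*} {N : ℕ} {X Y : κ → ℕ} (hN : 0 < N) (h : Near N X Y) (k l : κ) :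
    X k < X l ↔ Y k < Y l := by
  have := h.le_iff hN l k
  omega

/-- One back-and-forth step: a new entry `a`, not below all entries of `X`, has a counterpart `b`
for `Y`. It is placed between the entries of `Y` corresponding to the neighbours of `a` in `X`. -/
theorem Near.exists_extension {κ : Type*} [Finite κ] {N : ℕ} (hN : 0 < N) {X Y : κ → ℕ}
    (h : Near (3 * N) X Y) {o : κ} {a : ℕ} (ho : X o ≤ a) :
    ∃ b, ∀ k, Sim N (X k - a) (Y k - b) ∧ Sim N (a - X k) (b - Y k) := by
  classical
  have := Fintype.ofFinite κ
  have h3 : 0 < 3 * N := by omega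
  have hd : N ∣ 3 * N := Dvd.intro_left 3 rfl
  have hz : ∀ {p q : ℕ}, p = 0 → q = 0 → Sim N p q := by
    rintro _ _ rfl rfl
    exact Sim.refl _ _
  obtain ⟨i, hi, himax⟩ := Finset.exists_max_image (Finset.univ.filter fun k => X k ≤ a) X
    ⟨o, by simpa using ho⟩
  simp only [Finset.mem_filter, Finset.mem_univ, true_and] at hi himax
  have low : ∀ b, Y i ≤ b → Sim N (a - X i) (b - Y i) → ∀ k, X k ≤ a →
      Sim N (X k - a) (Y k - b) ∧ Sim N (a - X k) (b - Y k) := by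
    intro b hb hs k hk
    have h1 := himax k hk
    have h2 := (h.le_iff h3 k i).1 h1
    refine ⟨hz (by omega) (by omega), ?_⟩
    have := hs.add ((h i k).of_dvd h3 hd)
    rwa [show a - X i + (X i - X k) = a - X k by omega,
      show b - Y i + (Y i - Y k) = b - Y k by omega] at this
  by_cases hj : ∃ j, a < X j
  · obtain ⟨j', hj'⟩ := hj
    obtain ⟨j, hj, hjmin⟩ := Finset.exists_min_image (Finset.univ.filter fun k => a < X k) X
      ⟨j', by simpa using hj'⟩
    simp only [Finset.mem_filter, Finset.mem_univ, true_and] at hj hjmin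
    obtain ⟨t, ht, hs1, hs2⟩ := (h j i).exists_split hN (s := a - X i) (by omega)
    have hij := (h.lt_iff h3 i j).1 (by omega)
    have hpos := hs2.eq_zero_iff hN
    refine ⟨Y i + t, fun k => ?_⟩
    by_cases hk : X k ≤ a
    · exact low _ (by omega) (by rwa [Nat.add_sub_cancel_left]) k hk
    · have h1 := hjmin k (by omega)
      have h2 := (h.le_iff h3 j k).1 h1
      refine ⟨?_, hz (by omega) (by omega)⟩
      have := ((h k j).of_dvd h3 hd).add hs2
      rwa [show X k - X j + (X j - X i - (a - X i)) = X k - a by omega,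
        show Y k - Y j + (Y j - Y i - t) = Y k - (Y i + t) by omega] at this
  · push Not at hj
    exact ⟨Y i + (a - X i), fun k => low _ (by omega)
      (by rw [Nat.add_sub_cancel_left]; exact Sim.refl _ _) k (hj k)⟩

/-- `R` is a union of classes of near tuples, at some positive level. -/
def NearInvariant {ι : Type*} (R : Set (ι → ℕ)) : Prop :=
  ∃ N > 0, ∀ x y, Near N (pt x) (pt y) → x ∈ R → y ∈ R

/-! ### Regular sets of natural numbers -/

/-- A finite colouring of words that determines the left quotients of `L` makes `L` regular. -/
theorem isRegular_of_coloring {α β : Type*} [Finite β] {L : _root_.Language α} (c : List α → β)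
    (h : ∀ w w', c w = c w' → ∀ v, w ++ v ∈ L → w' ++ v ∈ L) : L.IsRegular := by
  rw [Language.isRegular_iff_finite_range_leftQuotient]
  have : Function.FactorsThrough L.leftQuotient c := by
    intro w w' hw
    ext v
    simp only [Language.mem_leftQuotient]
    exact ⟨h _ _ hw v, h _ _ hw.symm v⟩
  obtain ⟨e, he⟩ := (Function.factorsThrough_iff _).1 this
  rw [he]
  exact (Set.finite_range e).subset (Set.range_comp_subset_range c e)

theorem RegularSet.of_sim {N : ℕ} (hN : 0 < N) {E : Set ℕ}
    (h : ∀ a b, Sim N a b → a ∈ E → b ∈ E) : RegularSet E := by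
  refine isRegular_of_coloring (fun w => simCode N hN w.length) fun w w' hw v hv => ?_
  rw [simCode_eq_iff] at hw
  change (w ++ v).length ∈ E at hv
  change (w' ++ v).length ∈ E
  rw [List.length_append] at hv ⊢
  exact h _ _ (hw.add (Sim.refl _ _)) hv

theorem RegularSet.exists_sim {E : Set ℕ} (hE : RegularSet E) :
    ∃ N > 0, ∀ a b, Sim N a b → (a ∈ E ↔ b ∈ E) := by
  obtain ⟨σ, _, M, hM⟩ := hE
  obtain ⟨N, hN, h⟩ := exists_sim_iterate σ
  have key : ∀ a, a ∈ E ↔ (fun s => M.step s ())^[a] M.start ∈ M.accept := by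
    intro a
    have h1 : List.replicate a () ∈ M.accepts ↔ a ∈ E := by
      rw [hM]
      change (List.replicate a ()).length ∈ E ↔ _
      rw [List.length_replicate]
    rw [← h1, DFA.mem_accepts]
    have : ∀ a, M.eval (List.replicate a ()) = (fun s => M.step s ())^[a] M.start := by
      intro a
      induction a with
      | zero => rfl
      | succ a ih =>
        rw [List.replicate_succ', DFA.eval_append_singleton, ih, Function.iterate_succ_apply']
    rw [this]
  exact ⟨N, hN, fun a b hab => by rw [key, key, h _ a b hab]⟩

/-! ### Synchronous relations -/

section Sync

variable {n : ℕ}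

theorem encVec_getElem? (x : Fin n → ℕ) (j : ℕ) :
    (encVec x)[j]? =
      if j < Finset.univ.sup x then some (fun i => decide (j < x i)) else none := by
  unfold encVec
  split_ifs with h <;> simp [h]

theorem length_encVec (x : Fin n → ℕ) : (encVec x).length = Finset.univ.sup x := by
  simp [encVec]

theorem le_sup_univ (x : Fin n → ℕ) (i : Fin n) : x i ≤ Finset.univ.sup x :=
  Finset.le_sup (Finset.mem_univ i)

theorem encVec_injective : Function.Injective (encVec (n := n)) := by
  intro x y h
  have hl : Finset.univ.sup x = Finset.univ.sup y := by
    rw [← length_encVec, ← length_encVec, h]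
  have key : ∀ i, ∀ j < Finset.univ.sup x, j < x i ↔ j < y i := by
    intro i j hj
    have h1 := congrArg (fun l => l[j]?) h
    simp only [encVec_getElem?, ← hl, hj, if_true, Option.some.injEq] at h1
    simpa using congrFun h1 i
  funext i
  have h1 := le_sup_univ x i
  have h2 := le_sup_univ y i
  have h3 := key i (x i)
  have h4 := key i (y i)
  omega

/-- The letter `a` may follow `encVec x`: it is nonzero, and supported on the indices where `x`
is maximal. -/
def Admissible (x : Fin n → ℕ) (a : Fin n → Bool) : Prop :=
  (∃ i, a i = true) ∧ ∀ i, a i = true → ∀ j, x j ≤ x i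

theorem admissible_of_encVec_eq {x z : Fin n → ℕ} {a : Fin n → Bool} {v : List (Fin n → Bool)}
    (h : encVec z = encVec x ++ a :: v) : Admissible x a := by
  set m := Finset.univ.sup x with hm
  have hlen : Finset.univ.sup z = m + (v.length + 1) := by
    rw [← length_encVec, h]
    simp [length_encVec, hm]
  have ha : ∀ i, a i = decide (m < z i) := by
    have h1 := congrArg (fun l => l[m]?) h
    rw [List.getElem?_append_right (by rw [length_encVec]), length_encVec] at h1
    simp only [encVec_getElem?, ← hm, hlen, Nat.sub_self, List.getElem?_cons_zero] at h1
    rw [if_pos (by omega), Option.some.injEq] at h1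
    intro i
    rw [← h1]
  have hx : ∀ i, ∀ j < m, j < z i ↔ j < x i := by
    intro i j hj
    have h1 := congrArg (fun l => l[j]?) h
    rw [List.getElem?_append_left (by rw [length_encVec]; exact hj)] at h1
    simp only [encVec_getElem?, ← hm, hlen, hj, if_true] at h1
    rw [if_pos (by omega), Option.some.injEq] at h1
    simpa using congrFun h1 i
  constructor
  · obtain ⟨i, -, hi⟩ := (Finset.lt_sup_iff).1 (show m < Finset.univ.sup z by omega)
    exact ⟨i, by rw [ha]; simpa using hi⟩
  · intro i hi j
    rw [ha, decide_eq_true_iff] at hi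
    have h1 := le_sup_univ x j
    have h2 := hx i (m - 1)
    omega

theorem encVec_add {x : Fin n → ℕ} {a : Fin n → Bool} (h : Admissible x a) :
    encVec (fun i => x i + (a i).toNat) = encVec x ++ [a] := by
  obtain ⟨⟨i₀, hi₀⟩, hmax⟩ := h
  have htop : ∀ i, a i = true → x i = Finset.univ.sup x := fun i hi =>
    le_antisymm (le_sup_univ x i) (Finset.sup_le fun j _ => hmax i hi j)
  have hsup : Finset.univ.sup (fun i => x i + (a i).toNat) = Finset.univ.sup x + 1 := by
    apply le_antisymm
    · refine Finset.sup_le fun i _ => ?_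
      have := le_sup_univ x i
      have := Bool.toNat_le (a i)
      omega
    · have := le_sup_univ (fun i => x i + (a i).toNat) i₀
      rw [← htop i₀ hi₀]
      simpa [hi₀] using this
  have h1 : encVec (fun i => x i + (a i).toNat) =
      (List.range (Finset.univ.sup x)).map (fun j i => decide (j < x i + (a i).toNat)) ++
        [fun i => decide (Finset.univ.sup x < x i + (a i).toNat)] := by
    unfold encVec
    rw [hsup, List.range_succ, List.map_append, List.map_singleton]
  rw [h1, encVec]
  congr 1
  · refine List.map_congr_left fun j hj => ?_
    rw [List.mem_range] at hj
    funext i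
    cases hai : a i
    · simp
    · have := htop i hai
      simp only [Bool.toNat_true, decide_eq_decide]
      omega
  · congr 1
    funext i
    cases hai : a i
    · simpa using le_sup_univ x i
    · simp [htop i hai]

/-- The encodings are closed under prefixes. -/
theorem exists_encVec_of_prefix {z : Fin n → ℕ} (w v : List (Fin n → Bool))
    (h : encVec z = w ++ v) : ∃ x, encVec x = w := by
  induction w using List.reverseRecOn generalizing v with
  | nil => exact ⟨fun _ => 0, List.eq_nil_of_length_eq_zero (by
      rw [length_encVec]; exact Nat.le_zero.1 (Finset.sup_le fun _ _ => le_rfl))⟩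
  | append_singleton w a ih =>
    rw [List.append_assoc, List.singleton_append] at h
    obtain ⟨x, rfl⟩ := ih _ h
    exact ⟨_, encVec_add (admissible_of_encVec_eq h)⟩

theorem Near.admissible {N : ℕ} (hN : 0 < N) {x y : Fin n → ℕ} (h : Near N (pt x) (pt y))
    {a : Fin n → Bool} (ha : Admissible x a) : Admissible y a :=
  ⟨ha.1, fun i hi j => (h.le_iff hN (some j) (some i)).1 (ha.2 i hi j)⟩

theorem Near.add_letter {N : ℕ} (hN : 0 < N) {x y : Fin n → ℕ} (h : Near N (pt x) (pt y))
    {a : Fin n → Bool} (ha : Admissible x a) :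
    Near N (pt fun i => x i + (a i).toNat) (pt fun i => y i + (a i).toNat) := by
  have hb := h.admissible hN ha
  rintro (_ | i) (_ | j)
  · exact Sim.refl _ _
  · simpa using Sim.refl N 0
  · simpa using (h (some i) none).add (Sim.refl N (a i).toNat)
  · have hij := h (some i) (some j)
    simp only [pt_some] at hij ⊢
    cases hi : a i <;> cases hj : a j
    · simpa using hij
    · have := ha.2 j hj i
      have := hb.2 j hj i
      rw [show x i + false.toNat - (x j + true.toNat) = 0 by simp; omega,
        show y i + false.toNat - (y j + true.toNat) = 0 by simp; omega]
      exact Sim.refl _ _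
    · have := ha.2 i hi j
      have := hb.2 i hi j
      rw [show x i + true.toNat - (x j + false.toNat) = x i - x j + 1 by simp; omega,
        show y i + true.toNat - (y j + false.toNat) = y i - y j + 1 by simp; omega]
      exact hij.add (Sim.refl _ _)
    · simpa using hij

/-- Encodings of near tuples have the same continuations into `R`. -/
theorem Near.append_mem {N : ℕ} (hN : 0 < N) {R : Set (Fin n → ℕ)}
    (hR : ∀ x y, Near N (pt x) (pt y) → x ∈ R → y ∈ R) (v : List (Fin n → Bool))
    {x y : Fin n → ℕ} (h : Near N (pt x) (pt y)) (hx : ∃ z ∈ R, encVec z = encVec x ++ v) :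
    ∃ z ∈ R, encVec z = encVec y ++ v := by
  induction v generalizing x y with
  | nil =>
    obtain ⟨z, hz, he⟩ := hx
    rw [List.append_nil] at he
    rw [encVec_injective he] at hz
    exact ⟨y, hR _ _ h hz, by simp⟩
  | cons a v ih =>
    obtain ⟨z, hz, he⟩ := hx
    have ha := admissible_of_encVec_eq he
    have hb := h.admissible hN ha
    have key := ih (h.add_letter hN ha) ⟨z, hz, by
      rw [encVec_add ha, he, List.append_assoc, List.singleton_append]⟩
    rwa [encVec_add hb, List.append_assoc, List.singleton_append] at key

theorem sync_of_inv {R : Set (Fin n → ℕ)} (h : NearInvariant R) : SyncRelN R := by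
  classical
  obtain ⟨N, hN, hR⟩ := h
  -- the colour of an encoding is the nearness class of its tuple; other words share one colour
  refine isRegular_of_coloring (fun w => if h : ∃ x : Fin n → ℕ, encVec x = w
    then some (fun k l => simCode N hN (pt h.choose k - pt h.choose l)) else none) ?_
  rintro w w' hc v ⟨z, hz, he⟩
  obtain ⟨x, rfl⟩ := exists_encVec_of_prefix w v he
  have hx : ∃ y, encVec y = encVec x := ⟨x, rfl⟩
  simp only [dif_pos hx] at hc
  by_cases hw : ∃ y, encVec y = w'
  · rw [dif_pos hw, Option.some.injEq] at hc
    rw [encVec_injective hx.choose_spec] at hc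
    have hnear : Near N (pt x) (pt hw.choose) := fun k l =>
      (simCode_eq_iff hN).1 (congrFun (congrFun hc k) l)
    have := hnear.append_mem hN hR v ⟨z, hz, he⟩
    rwa [hw.choose_spec] at this
  · rw [dif_neg hw] at hc
    exact absurd hc (by simp)

/-- The letters of positions `0, …, t - 1` in the (infinitely extended) encoding of `x`. -/
def encTo (x : Fin n → ℕ) (t : ℕ) : List (Fin n → Bool) :=
  (List.range t).map (fun j i => decide (j < x i))

/-- A block of `s` equal letters iterates the transition map of that letter. -/
theorem eval_encTo_add {σ : Type*} (M : DFA (Fin n → Bool) σ) (x : Fin n → ℕ)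
    (a : Fin n → Bool) (t s : ℕ) (h : ∀ j, t ≤ j → j < t + s → ∀ i, decide (j < x i) = a i) :
    M.eval (encTo x (t + s)) = (fun q => M.step q a)^[s] (M.eval (encTo x t)) := by
  induction s with
  | zero => rfl
  | succ s ih =>
    have h1 : encTo x (t + (s + 1)) = encTo x (t + s) ++ [a] := by
      rw [← add_assoc, encTo, List.range_succ, List.map_append, List.map_singleton]
      congr 2
      funext i
      exact h _ (by omega) (by omega) i
    rw [h1, DFA.eval_append_singleton, ih fun j h1 h2 => h j h1 (by omega),
      Function.iterate_succ_apply']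

/-- An automaton is in the same state after reading corresponding prefixes of the encodings of
near tuples, by induction along the entries. -/
theorem eval_encTo_eq {σ : Type*} (M : DFA (Fin n → Bool) σ) {N : ℕ} (hN : 0 < N)
    (hit : ∀ f : σ → σ, ∀ a b, Sim N a b → f^[a] = f^[b]) {x y : Fin n → ℕ}
    (h : Near N (pt x) (pt y)) (k : Option (Fin n)) :
    M.eval (encTo x (pt x k)) = M.eval (encTo y (pt y k)) := by
  induction hm : pt x k using Nat.strong_induction_on generalizing k with
  | _ m ih =>
    subst hm
    by_cases h0 : pt x k = 0
    · have : pt y k = 0 := by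
        have := h.le_iff hN k none
        simp only [pt_none] at this
        omega
      rw [h0, this]
      rfl
    -- `l` is the predecessor of `k` in the order of the entries
    obtain ⟨l, hl, hlmax⟩ := Finset.exists_max_image
      (Finset.univ.filter fun l => pt x l < pt x k) (pt x)
      ⟨none, by simp only [Finset.mem_filter, Finset.mem_univ, true_and, pt_none]; omega⟩
    simp only [Finset.mem_filter, Finset.mem_univ, true_and] at hl hlmax
    have hl' := (h.lt_iff hN l k).1 hl
    have hxs := eval_encTo_add M x (fun i => decide (pt x l < x i)) (pt x l) (pt x k - pt x l) (by
      intro j h1 h2 i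
      have := hlmax (some i)
      simp only [pt_some] at this
      simp only [decide_eq_decide]
      omega)
    have hys := eval_encTo_add M y (fun i => decide (pt x l < x i)) (pt y l) (pt y k - pt y l) (by
      intro j h1 h2 i
      have h3 := hlmax (some i)
      have h4 := h.lt_iff hN (some i) k
      have h5 := h.lt_iff hN l (some i)
      simp only [pt_some] at h3 h4 h5
      simp only [decide_eq_decide]
      omega)
    rw [Nat.add_sub_cancel' hl.le] at hxs
    rw [Nat.add_sub_cancel' hl'.le] at hys
    rw [hxs, hys, ih _ hl l rfl, hit _ _ _ (h k l)]

theorem exists_pt_eq_sup (x : Fin n → ℕ) :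
    ∃ k, pt x k = Finset.univ.sup x ∧ ∀ l, pt x l ≤ pt x k := by
  obtain ⟨k, -, hk⟩ := Finset.exists_max_image Finset.univ (pt x) Finset.univ_nonempty
  refine ⟨k, le_antisymm ?_ (Finset.sup_le fun i _ => hk (some i) (Finset.mem_univ _)),
    fun l => hk l (Finset.mem_univ _)⟩
  cases k
  · simp
  · exact le_sup_univ x _

theorem inv_of_sync {R : Set (Fin n → ℕ)} (h : SyncRelN R) : NearInvariant R := by
  obtain ⟨σ, _, M, hM⟩ := h
  obtain ⟨N, hN, hit⟩ := exists_sim_iterate σ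
  have hmem : ∀ x, x ∈ R ↔ M.eval (encVec x) ∈ M.accept := by
    intro x
    rw [← DFA.mem_accepts, hM]
    change _ ↔ ∃ z ∈ R, encVec z = encVec x
    exact ⟨fun hx => ⟨x, hx, rfl⟩, fun ⟨z, hz, he⟩ => encVec_injective he ▸ hz⟩
  refine ⟨N, hN, fun x y hxy hx => ?_⟩
  rw [hmem] at hx ⊢
  obtain ⟨k, hk, hkmax⟩ := exists_pt_eq_sup x
  obtain ⟨k', hk', hkmax'⟩ := exists_pt_eq_sup y
  have hyk : pt y k = Finset.univ.sup y := by
    rw [← hk']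
    exact le_antisymm (hkmax' k) ((hxy.le_iff hN k' k).1 (hkmax k'))
  have := eval_encTo_eq M hN hit hxy k
  rw [hk, hyk] at this
  change M.eval (encTo y _) ∈ _
  rw [← this]
  exact hx

end Sync

/-! ### Definable relations -/

section Def

/-- The relation symbol `D_E`. -/
def relD (E : Set ℕ) (hE : RegularSet E) : DLang.Relations 2 :=
  (⟨E, hE⟩ : {E : Set ℕ // RegularSet E})

theorem relMap_iff (r : DLang.Relations 2) (x : Fin 2 → ℕ) :
    Structure.RelMap r x ↔
      x 1 ≤ x 0 ∧ x 0 - x 1 ∈ (show {E : Set ℕ // RegularSet E} from r).1 := Iff.rfl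

theorem relMap_relD (E : Set ℕ) (hE : RegularSet E) (x : Fin 2 → ℕ) :
    Structure.RelMap (relD E hE) x ↔ x 1 ≤ x 0 ∧ x 0 - x 1 ∈ E := Iff.rfl

theorem regularSet_univ : RegularSet Set.univ :=
  RegularSet.of_sim one_pos fun _ _ _ _ => Set.mem_univ _

/-- The formula `D_E(a, b)`. -/
def relF {α : Type} (E : Set ℕ) (hE : RegularSet E) (a b : α) : DLang.Formula α :=
  (relD E hE).formula₂ (Term.var a) (Term.var b)

theorem realize_relF {α : Type} (E : Set ℕ) (hE : RegularSet E) (a b : α) (X : α → ℕ) :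
    (relF E hE a b).Realize X ↔ X b ≤ X a ∧ X a - X b ∈ E := by
  rw [relF, Formula.realize_rel₂, relMap_relD]
  simp

/-- The formula expressing that the variable `a` is the least element, i.e. `0`. -/
def zeroF {α : Type} (a : α) : DLang.Formula α :=
  BoundedFormula.all
    ((relD Set.univ regularSet_univ).boundedFormula₂ (Term.var (Sum.inr 0)) (Term.var (Sum.inl a)))

theorem realize_zeroF {α : Type} (a : α) (X : α → ℕ) : (zeroF a).Realize X ↔ X a = 0 := by
  rw [zeroF, Formula.Realize, BoundedFormula.realize_all]
  simp only [BoundedFormula.realize_rel₂, relMap_relD, Term.realize_var, Sum.elim_inl,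
    Sum.elim_inr, Matrix.cons_val_zero, Matrix.cons_val_one, Set.mem_univ, and_true]
  constructor
  · intro h
    exact Nat.le_zero.1 (h 0)
  · intro h c
    rw [h]
    exact Nat.zero_le _

/-- Membership of a truncated difference in a regular set `E` is definable. -/
theorem definable_sub_mem {α : Type} (E : Set ℕ) (hE : RegularSet E) (a b : α) :
    (∅ : Set ℕ).Definable DLang {X : α → ℕ | X a - X b ∈ E} := by
  have h1 : (∅ : Set ℕ).Definable DLang {X : α → ℕ | X b ≤ X a ∧ X a - X b ∈ E} :=
    Set.empty_definable_iff.2 ⟨relF E hE a b, by ext X; exact (realize_relF E hE a b X).symm⟩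
  -- if `X a ≤ X b` the truncated difference is `0`, and `E` may or may not contain `0`
  by_cases h0 : 0 ∈ E
  · have h2 : (∅ : Set ℕ).Definable DLang {X : α → ℕ | X a ≤ X b ∧ X b - X a ∈ Set.univ} :=
      Set.empty_definable_iff.2 ⟨relF Set.univ regularSet_univ b a, by
        ext X; exact (realize_relF _ regularSet_univ b a X).symm⟩
    convert h1.union h2 using 1
    ext X
    simp only [Set.mem_ofPred_eq, Set.mem_union, Set.mem_univ, and_true]
    rcases le_total (X a) (X b) with h | h
    · simp [h, Nat.sub_eq_zero_of_le h, h0]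
    · constructor
      · exact fun h' => Or.inl ⟨h, h'⟩
      · rintro (h' | h')
        · exact h'.2
        · rw [Nat.sub_eq_zero_of_le h']; exact h0
  · convert h1 using 1
    ext X
    simp only [Set.mem_ofPred_eq]
    constructor
    · intro h
      refine ⟨?_, h⟩
      by_contra hlt
      rw [Nat.sub_eq_zero_of_le (by omega)] at h
      exact h0 h
    · exact fun h => h.2

theorem definable_of_inv {n : ℕ} {R : Set (Fin n → ℕ)} (h : NearInvariant R) :
    (∅ : Set ℕ).Definable DLang R := by
  obtain ⟨N, hN, hR⟩ := h
  let C := Option (Fin n) → Option (Fin n) → Fin (N + 1) × Fin N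
  let cls : (Option (Fin n) → ℕ) → C := fun X k l => simCode N hN (X k - X l)
  have hC : ∀ c : C, (∅ : Set ℕ).Definable DLang {X | cls X = c} := by
    intro c
    have : {X | cls X = c} =
        ⋂ k, ⋂ l, {X : Option (Fin n) → ℕ | X k - X l ∈ {a | simCode N hN a = c k l}} := by
      ext X
      simp only [Set.mem_ofPred_eq, Set.mem_iInter]
      exact ⟨fun h k l => congrFun (congrFun h k) l, fun h => funext fun k => funext (h k)⟩
    rw [this]
    refine Set.definable_iInter_of_finite fun k => Set.definable_iInter_of_finite fun l => ?_
    refine definable_sub_mem _ (RegularSet.of_sim hN fun a b hab ha => ?_) k l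
    change simCode N hN b = c k l
    rw [← (simCode_eq_iff hN).2 hab]
    exact ha
  have hzero : (∅ : Set ℕ).Definable DLang {X : Option (Fin n) → ℕ | X none = 0} :=
    Set.empty_definable_iff.2 ⟨zeroF none, by ext X; exact (realize_zeroF none X).symm⟩
  have hU : (∅ : Set ℕ).Definable DLang
      (⋃ c : {c : C // ∃ x ∈ R, cls (pt x) = c}, {X | cls X = c.1}) :=
    Set.definable_iUnion_of_finite fun c => hC c.1
  -- the adjoined entry `0` is quantified away by projecting along `some`
  convert (hzero.inter hU).image_comp (some : Fin n → Option (Fin n)) using 1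
  ext x
  simp only [Set.mem_image, Set.mem_inter_iff, Set.mem_ofPred_eq, Set.mem_iUnion]
  constructor
  · intro hx
    exact ⟨pt x, ⟨rfl, ⟨_, x, hx, rfl⟩, rfl⟩, rfl⟩
  · rintro ⟨X, ⟨h0, ⟨_, y, hy, rfl⟩, hc⟩, rfl⟩
    have hX : pt (fun i => X (some i)) = X := by
      funext k
      cases k
      · exact h0.symm
      · rfl
    refine hR y _ (fun k l => ?_) hy
    change Sim N _ (pt (fun i => X (some i)) k - pt (fun i => X (some i)) l)
    rw [hX]
    exact (simCode_eq_iff hN).1 (congrFun (congrFun hc.symm k) l)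

/-- Terms of `DLang` are variables. -/
theorem term_eq_var {α : Type} (t : DLang.Term α) : ∃ a, t = Term.var a := by
  cases t with
  | var a => exact ⟨a, rfl⟩
  | func f _ => exact f.elim

/-- The truth value of a formula is invariant under nearness at some level. -/
theorem exists_near_realize {α : Type} [Finite α] {m : ℕ} (φ : DLang.BoundedFormula α m) :
    ∃ N > 0, ∀ (v v' : α → ℕ) (xs xs' : Fin m → ℕ),
      Near N (pt (Sum.elim v xs)) (pt (Sum.elim v' xs')) →
        (φ.Realize v xs ↔ φ.Realize v' xs') := by
  induction φ with
  | falsum => exact ⟨1, one_pos, fun _ _ _ _ _ => Iff.rfl⟩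
  | equal t₁ t₂ =>
    obtain ⟨a, rfl⟩ := term_eq_var t₁
    obtain ⟨b, rfl⟩ := term_eq_var t₂
    refine ⟨1, one_pos, fun v v' xs xs' h => ?_⟩
    have h1 := h.le_iff one_pos (some a) (some b)
    have h2 := h.le_iff one_pos (some b) (some a)
    simp only [pt_some] at h1 h2
    change Sum.elim v xs a = Sum.elim v xs b ↔ Sum.elim v' xs' a = Sum.elim v' xs' b
    omega
  | @rel m l R ts =>
    match l, R, ts with
    | 2, R, ts =>
      obtain ⟨a, ha⟩ := term_eq_var (ts 0)
      obtain ⟨b, hb⟩ := term_eq_var (ts 1)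
      obtain ⟨N, hN, hE⟩ := (show {E : Set ℕ // RegularSet E} from R).2.exists_sim
      refine ⟨N, hN, fun v v' xs xs' h => ?_⟩
      change (Structure.RelMap R fun i => (ts i).realize (Sum.elim v xs)) ↔
        Structure.RelMap R fun i => (ts i).realize (Sum.elim v' xs')
      rw [relMap_iff, relMap_iff, ha, hb]
      exact and_congr (h.le_iff hN (some b) (some a)) (hE _ _ (h (some a) (some b)))
    | 0, R, _ => exact Empty.elim R
    | 1, R, _ => exact Empty.elim R
    | _ + 3, R, _ => exact Empty.elim R
  | imp φ₁ φ₂ ih₁ ih₂ =>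
    obtain ⟨N₁, h₁, H₁⟩ := ih₁
    obtain ⟨N₂, h₂, H₂⟩ := ih₂
    have hpos := Nat.mul_pos h₁ h₂
    refine ⟨N₁ * N₂, hpos, fun v v' xs xs' h => ?_⟩
    exact imp_congr (H₁ _ _ _ _ (h.of_dvd hpos (Dvd.intro _ rfl)))
      (H₂ _ _ _ _ (h.of_dvd hpos (Dvd.intro_left _ rfl)))
  | @all m φ ih =>
    obtain ⟨N, hN, H⟩ := ih
    have key : ∀ (v v' : α → ℕ) (xs xs' : Fin m → ℕ),
        Near (3 * N) (pt (Sum.elim v xs)) (pt (Sum.elim v' xs')) →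
          (∀ a, φ.Realize v' (Fin.snoc xs' a)) → ∀ a, φ.Realize v (Fin.snoc xs a) := by
      intro v v' xs xs' h hφ a
      obtain ⟨b, hb⟩ := h.exists_extension hN (o := none) (a := a) (Nat.zero_le a)
      refine (H _ _ _ _ ?_).2 (hφ b)
      -- each index of the extended tuple is an old index or the new one
      have hidx : ∀ k : Option (α ⊕ Fin (m + 1)),
          (∃ k', pt (Sum.elim v (Fin.snoc xs a : Fin (m + 1) → ℕ)) k = pt (Sum.elim v xs) k' ∧
            pt (Sum.elim v' (Fin.snoc xs' b : Fin (m + 1) → ℕ)) k = pt (Sum.elim v' xs') k') ∨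
          (pt (Sum.elim v (Fin.snoc xs a : Fin (m + 1) → ℕ)) k = a ∧
            pt (Sum.elim v' (Fin.snoc xs' b : Fin (m + 1) → ℕ)) k = b) := by
        rintro (_ | i | j)
        · exact Or.inl ⟨none, rfl, rfl⟩
        · exact Or.inl ⟨some (Sum.inl i), rfl, rfl⟩
        · induction j using Fin.lastCases with
          | last => right; simp
          | cast j => exact Or.inl ⟨some (Sum.inr j), by simp, by simp⟩
      intro k l
      rcases hidx k with ⟨k', h1, h2⟩ | ⟨h1, h2⟩ <;>
        rcases hidx l with ⟨l', h3, h4⟩ | ⟨h3, h4⟩ <;> rw [h1, h2, h3, h4]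
      · exact (h k' l').of_dvd (by omega) (Dvd.intro_left 3 rfl)
      · exact (hb k').1
      · exact (hb l').2
      · simpa using Sim.refl N 0
    refine ⟨3 * N, by omega, fun v v' xs xs' h => ?_⟩
    rw [BoundedFormula.realize_all, BoundedFormula.realize_all]
    exact ⟨key _ _ _ _ h.symm, key _ _ _ _ h⟩

theorem inv_of_formula {n : ℕ} {R : Set (Fin n → ℕ)} (φ : DLang.Formula (Fin n))
    (h : ∀ x, x ∈ R ↔ φ.Realize x) : NearInvariant R := by
  obtain ⟨N, hN, H⟩ := exists_near_realize φ
  refine ⟨N, hN, fun x y hxy hx => ?_⟩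
  rw [h, Formula.Realize] at hx ⊢
  refine (H x y _ _ ?_).1 hx
  -- the formula has no bound variables in scope, so its variables are just those of `x`
  have e : ∀ (z : Fin n → ℕ) (xs : Fin 0 → ℕ) (k : Option (Fin n ⊕ Fin 0)),
      pt (Sum.elim z xs) k = pt z (k.map (Equiv.sumEmpty (Fin n) (Fin 0))) := by
    rintro z xs (_ | i | j)
    · rfl
    · rfl
    · exact j.elim0
  intro k l
  rw [e, e, e, e]
  exact hxy _ _

end Def

theorem synchronous_iff_definable {n : ℕ} (R : Set (Fin n → ℕ)) :
    SyncRelN R ↔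
      ∃ φ : DLang.Formula (Fin n), ∀ x : Fin n → ℕ, x ∈ R ↔ φ.Realize x := by
  constructor
  · intro h
    obtain ⟨φ, hφ⟩ := Set.empty_definable_iff.1 (definable_of_inv (inv_of_sync h))
    exact ⟨φ, fun x => by rw [hφ]; rfl⟩
  · rintro ⟨φ, hφ⟩
    exact sync_of_inv (inv_of_formula φ hφ)
end

section
/- Let M be a DFA over the alphabet {B,L,R} with n states such that the relation R_M it recognizes is an order on ℕ. If R_M has no infinite antichain, then every antichain of R_M has at most 2n + 2 elements. -/
/-!
Write `q x` for the state reached after reading `B` exactly `x` times, and `n` for the number of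
states. For `x < y` the comparison of `x` with `y` depends only on `q x` and `y - x`, through the
run of the letter `R` (is `x` below `y`?) and that of `L` (is `x` above `y`?) from `q x`.  There are
`t` and `p > 0` with `t + p ≤ n` such that `q` has period `p` from `t` on, and with `N = n!` every
run of a single letter has period `N` after `n` steps. In particular the order is invariant under
translation by `N` on `[t, ∞)`.

Split a (necessarily finite) antichain `X` into its at most `t` elements below `t` and, among the
others, the `x` that are below `x + N`, those that are above it, and those incomparable with it.
The elements from `t` on number at most `n + p`, by double counting: each of them is given `N`
pairs (residue modulo `N`, slot) with `n + p` possible slots, in such a way that no pair is used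
twice. The total is thus at most `t + n + p ≤ 2 n`.

* `x` below `x + N` (`Upward.exists_slots`). Let `F x` be the set of residues eventually above `x`,
  with least period `ℓ`. If the runs from `x` and `y` meet, then `F x` and `F y` are translates of
  each other and have the same `ℓ`; if moreover `x ≡ y` modulo `ℓ`, then `x ∈ F x` and `y ∈ F y`
  give `y ∈ F x` and `x ∈ F y`, and so `F x = F y` by transitivity. Let `e` be the least element
  of `X` with `F e = F x`. The antichain condition forces the run from `e` to be still aperiodic at
  every later element of `X` with the same future (`Upward.run_injective`), so the states it visits
  at times in `[x, x + ℓ)`, paired with the residues congruent to `x` modulo `ℓ`, are never reused.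
* `x` above `x + N`: the same for the reversed order and the letter `L`. The residues are
  disjoint from the previous ones, since a late `z` with `x < z < y` in the order contradicts
  the incomparability of `x` and `y`.
* `x` incomparable with `x + N`. Then the progression `x + ℕ N` is an antichain, so it is not
  contained in the support; hence `x` is comparable only with elements below `t`, at distance
  less than `n`, and `x < t + n`. The slots are the integers in `[x - t, x - t + p)` and the
  residues those congruent to `x` modulo `p`; they differ from the previous residues, because
  elements with such a residue from `t` on are comparable with no element of `[t, ∞)`.
-/

/-- Encoding of a pair of naturals as a word over the alphabet `Fin 3`,
where letter `0` stands for `B`, `1` for `L`, `2` for `R`. -/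
def encPair (k l : ℕ) : List (Fin 3) :=
  (List.range (max k l)).map (fun i => if i < min k l then 0 else if i < k then 1 else 2)

/-- A binary relation on ℕ is synchronous if the language of encodings of its pairs
is regular. -/
def SyncRel (R : ℕ → ℕ → Prop) : Prop :=
  Language.IsRegular {w : List (Fin 3) | ∃ k l, R k l ∧ encPair k l = w}

/-- The support of a binary relation on ℕ. -/
def supp (R : ℕ → ℕ → Prop) : Set ℕ := {x | ∃ y, R x y ∨ R y x}

/-- A (strict partial) order on ℕ: a transitive relation with no 2-cycle
(in particular irreflexive). -/
def IsOrderRel (R : ℕ → ℕ → Prop) : Prop :=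
  (∀ x y z, R x y → R y z → R x z) ∧ ¬∃ x y, R x y ∧ R y x

/-- The relation is linear if any two distinct elements of the support are comparable. -/
def IsLinearRel (R : ℕ → ℕ → Prop) : Prop :=
  ∀ x ∈ supp R, ∀ y ∈ supp R, x ≠ y → R x y ∨ R y x

/-- The restriction of a relation on ℕ to its support. -/
def restrict (R : ℕ → ℕ → Prop) : supp R → supp R → Prop := fun a b => R a b

/-- The binary relation on ℕ recognized by a DFA over the alphabet `Fin 3`. -/
def recognizedRel {σ : Type*} (M : DFA (Fin 3) σ) : ℕ → ℕ → Prop :=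
  fun k l => encPair k l ∈ M.accepts

/-- A chain of an order `R`: a subset of the support whose elements are pairwise
comparable by `R`. -/
def IsChainOf (R : ℕ → ℕ → Prop) (C : Set ℕ) : Prop :=
  C ⊆ supp R ∧ ∀ a ∈ C, ∀ b ∈ C, a ≠ b → R a b ∨ R b a

/-- An antichain of an order `R`: a subset of the support no two distinct elements
of which are comparable by `R`. -/
def IsAntichainOf (R : ℕ → ℕ → Prop) (A : Set ℕ) : Prop :=
  A ⊆ supp R ∧ ∀ a ∈ A, ∀ b ∈ A, a ≠ b → ¬R a b ∧ ¬R b a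

/-! ### Iterates of a self-map of a finite type -/

/-- The orbit of `v` is periodic from its first repetition on. -/
lemma iterate_add_mul {σ : Type*} (f : σ → σ) (v : σ) {i j d : ℕ} (hij : i < j)
    (h : f^[i] v = f^[j] v) (hd : i ≤ d) (m : ℕ) :
    f^[d + (j - i) * m] v = f^[d] v := by
  have hp : Function.IsPeriodicPt f (j - i) (f^[i] v) := by
    change f^[j - i] (f^[i] v) = f^[i] v
    rw [← Function.iterate_add_apply, Nat.sub_add_cancel hij.le, h]
  have h2 := ((hp.apply_iterate (d - i)).mul_const m)
  rw [← Function.iterate_add_apply, Nat.sub_add_cancel hd] at h2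
  have h3 : f^[(j - i) * m] (f^[d] v) = f^[d] v := h2
  rw [← Function.iterate_add_apply] at h3
  rw [add_comm]; exact h3

lemma exists_iterate_eq {σ : Type*} [Fintype σ] (f : σ → σ) (v : σ) :
    ∃ i j, i < j ∧ j ≤ Fintype.card σ ∧ f^[i] v = f^[j] v := by
  obtain ⟨a, b, hab, he⟩ := Fintype.exists_ne_map_eq_of_card_lt
    (fun i : Fin (Fintype.card σ + 1) => f^[(i : ℕ)] v) (by simp)
  have hne : (a : ℕ) ≠ b := fun h => hab (Fin.ext h)
  rcases lt_or_gt_of_ne hne with h | h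
  · exact ⟨a, b, h, by have := b.2; omega, he⟩
  · exact ⟨b, a, h, by have := a.2; omega, he.symm⟩

lemma iterate_add_factorial {σ : Type*} [Fintype σ] (f : σ → σ) (v : σ) {d : ℕ}
    (hd : Fintype.card σ ≤ d) :
    f^[d + (Fintype.card σ).factorial] v = f^[d] v := by
  obtain ⟨i, j, hij, hj, he⟩ := exists_iterate_eq f v
  obtain ⟨m, hm⟩ := Nat.dvd_factorial (Nat.sub_pos_of_lt hij) (show j - i ≤ Fintype.card σ by omega)
  rw [hm]
  exact iterate_add_mul f v hij he (by omega) m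

/-! ### One direction of comparison -/

/-- A strict order `P` on `ℕ` for which `P x y` with `x < y` is decided by a deterministic run:
from the state `q x`, apply `f` exactly `y - x` times and test membership in `acc`.  The number
`N` is a common period of `q` (from the threshold `t` on) and of every orbit of `f` (after
`card σ` steps).  For a DFA this describes the letter `R` and the order; reversing the order
gives the same structure for the letter `L`. -/
structure Upward {σ : Type*} [Fintype σ] (P : ℕ → ℕ → Prop) (q : ℕ → σ) (f : σ → σ)
    (acc : Set σ) (t N : ℕ) : Prop where
  trans : ∀ x y z, P x y → P y z → P x z
  irrefl : ∀ x, ¬P x x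
  step : ∀ x y, x < y → (P x y ↔ f^[y - x] (q x) ∈ acc)
  per : ∀ x, t ≤ x → q (x + N) = q x
  iter : ∀ v d, Fintype.card σ ≤ d → f^[d + N] v = f^[d] v
  card_le : Fintype.card σ ≤ N
  pos : 0 < N

/-- The eventual future of `x`: a periodic set of times which agrees with `{z | P x z}` for `z`
far above `x` (see `Upward.iff_fut`). -/
def Fut {σ : Type*} (q : ℕ → σ) (f : σ → σ) (acc : Set σ) (N : ℕ) (x z : ℕ) : Prop :=
  f^[z + (N * (x + 1) - x)] (q x) ∈ acc

/-- Translation of a set of times by one. -/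
def shiftFut (h : ℕ → Prop) : ℕ → Prop := fun z => h (z + 1)

lemma shiftFut_iterate (d : ℕ) (h : ℕ → Prop) : shiftFut^[d] h = fun z => h (z + d) := by
  induction d generalizing h with
  | zero => rfl
  | succ d ih =>
    rw [Function.iterate_succ_apply, ih]
    funext z
    simp only [shiftFut]
    congr 1

namespace Upward

variable {σ : Type*} [Fintype σ] {P : ℕ → ℕ → Prop} {q : ℕ → σ} {f : σ → σ}
  {acc : Set σ} {t N : ℕ}

lemma iter_mul (H : Upward P q f acc t N) (v : σ) {d : ℕ} (hd : Fintype.card σ ≤ d) (k : ℕ) :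
    f^[d + k * N] v = f^[d] v := by
  induction k with
  | zero => simp
  | succ k ih =>
    rw [show d + (k + 1) * N = (d + k * N) + N by ring, H.iter _ _ (by omega), ih]

lemma per_mul (H : Upward P q f acc t N) {x : ℕ} (hx : t ≤ x) (k : ℕ) :
    q (x + k * N) = q x := by
  induction k with
  | zero => simp
  | succ k ih =>
    rw [show x + (k + 1) * N = (x + k * N) + N by ring, H.per _ (by omega), ih]

lemma tail_le (H : Upward P q f acc t N) (x : ℕ) :
    Fintype.card σ ≤ N * (x + 1) - x := by
  have := H.card_le
  have h1 := Nat.le_mul_of_pos_left x H.pos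
  rw [mul_add, mul_one]; omega

lemma fut_add_mul (H : Upward P q f acc t N) (x z k : ℕ) :
    Fut q f acc N x (z + k * N) ↔ Fut q f acc N x z := by
  unfold Fut
  rw [show z + k * N + (N * (x + 1) - x) = z + (N * (x + 1) - x) + k * N by ring,
    H.iter_mul _ (by have := H.tail_le x; omega)]

lemma iff_fut (H : Upward P q f acc t N) [Nonempty σ] {x y : ℕ} (h : x + Fintype.card σ ≤ y) :
    P x y ↔ Fut q f acc N x y := by
  have hc : 0 < Fintype.card σ := Fintype.card_pos
  rw [H.step x y (by omega)]
  unfold Fut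
  have h1 := Nat.le_mul_of_pos_left x H.pos
  have h2 : y + (N * (x + 1) - x) = (y - x) + (x + 1) * N := by
    rw [mul_comm (x + 1) N, mul_add, mul_one]; omega
  rw [h2, H.iter_mul _ (by omega)]

/-- Membership in the eventual future is witnessed by arbitrarily late elements. -/
lemma rel_of_fut (H : Upward P q f acc t N) [Nonempty σ] {x z : ℕ} (h : Fut q f acc N x z)
    {k : ℕ} (hk : x + Fintype.card σ ≤ k) : P x (z + k * N) := by
  have := Nat.le_mul_of_pos_right k H.pos
  rw [H.iff_fut (by omega), H.fut_add_mul]; exact h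

lemma rel_shift (H : Upward P q f acc t N) {x y : ℕ} (hx : t ≤ x) (hxy : x < y) (k : ℕ) :
    P (x + k * N) (y + k * N) ↔ P x y := by
  rw [H.step _ _ (by omega), H.step _ _ hxy, H.per_mul hx, Nat.add_sub_add_right]

lemma fut_shift (H : Upward P q f acc t N) [Nonempty σ] {x : ℕ} (hx : t ≤ x) (k z : ℕ) :
    Fut q f acc N (x + k * N) z ↔ Fut q f acc N x z := by
  have hc : 0 < Fintype.card σ := Fintype.card_pos
  have h3 := Nat.le_mul_of_pos_right (x + Fintype.card σ) H.pos
  rw [← H.fut_add_mul (x + k * N) z ((x + Fintype.card σ) + k),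
    ← H.fut_add_mul x z (x + Fintype.card σ), add_mul, ← add_assoc,
    ← H.iff_fut (by omega), ← H.iff_fut (by omega)]
  exact H.rel_shift hx (by omega) k

/-- If `x'` lies in the eventual future of `x`, then the future of `x'` is contained in that
of `x`. -/
lemma fut_trans (H : Upward P q f acc t N) [Nonempty σ] {x x' z : ℕ} (hx' : t ≤ x')
    (h : Fut q f acc N x x') (hz : Fut q f acc N x' z) : Fut q f acc N x z := by
  have h1 := H.rel_of_fut h le_rfl
  set k := x + Fintype.card σ
  have h2 := (H.fut_shift hx' k z).2 hz
  have h3 := H.rel_of_fut h2 (k := x' + k * N + Fintype.card σ + k) (by omega)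
  have h4 := H.trans _ _ _ h1 h3
  have h5 := Nat.le_mul_of_pos_right (x' + k * N + Fintype.card σ + k) H.pos
  rw [H.iff_fut (by omega), H.fut_add_mul] at h4
  exact h4

lemma fut_self (H : Upward P q f acc t N) [Nonempty σ] {x : ℕ} (h : P x (x + N)) :
    Fut q f acc N x x := by
  have := H.card_le
  rw [H.iff_fut (by omega)] at h
  have h2 := H.fut_add_mul x x 1
  rw [one_mul] at h2
  exact h2.1 h

lemma rel_multiples (H : Upward P q f acc t N) {z : ℕ} (hz : t ≤ z) {k k' : ℕ} (hk : k < k')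
    (h : P (z + k * N) (z + k' * N)) : P z (z + N) := by
  obtain ⟨d, rfl⟩ := Nat.exists_eq_add_of_lt hk
  have hN := H.pos
  rw [show z + (k + d + 1) * N = (z + (d + 1) * N) + k * N by ring,
    H.rel_shift hz (by have := Nat.le_mul_of_pos_left N (show 0 < d + 1 by omega); omega),
    H.step _ _ (by have := Nat.le_mul_of_pos_left N (show 0 < d + 1 by omega); omega)] at h
  rw [H.step _ _ (by omega)]
  rw [show z + (d + 1) * N - z = N + d * N by rw [add_mul, one_mul]; omega,
    H.iter_mul _ H.card_le] at h
  simpa using h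

lemma isPeriodicPt (H : Upward P q f acc t N) (x : ℕ) :
    Function.IsPeriodicPt shiftFut N (Fut q f acc N x) := by
  change shiftFut^[N] _ = _
  rw [shiftFut_iterate]
  funext z
  have := H.fut_add_mul x z 1
  rw [one_mul] at this
  exact propext this

/-- If the runs from `e` and `e'` meet, the futures of `e` and `e'` are translates of one
another. -/
lemma shift_eq (H : Upward P q f acc t N) [Nonempty σ] {e e' a b : ℕ}
    (h : f^[a] (q e) = f^[b] (q e')) :
    shiftFut^[e + a] (Fut q f acc N e) = shiftFut^[e' + b] (Fut q f acc N e') := by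
  have hc : 0 < Fintype.card σ := Fintype.card_pos
  rw [shiftFut_iterate, shiftFut_iterate]
  funext z
  apply propext
  have h3 := Nat.le_mul_of_pos_right (Fintype.card σ) H.pos
  rw [← H.fut_add_mul e _ (Fintype.card σ), ← H.fut_add_mul e' _ (Fintype.card σ),
    ← H.iff_fut (by omega), ← H.iff_fut (by omega), H.step _ _ (by omega), H.step _ _ (by omega)]
  rw [show z + (e + a) + Fintype.card σ * N - e = (z + Fintype.card σ * N) + a by omega,
    show z + (e' + b) + Fintype.card σ * N - e' = (z + Fintype.card σ * N) + b by omega,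
    Function.iterate_add_apply, Function.iterate_add_apply _ _ b, h]

/-- Suppose `x ≥ e` lies in the eventual future of `e` although `x` is not above `e`.  Then at
time `x` the run from `e` has not become periodic, so its states are distinct up to one
period `ℓ` of the future beyond `x`. -/
lemma run_injective (H : Upward P q f acc t N) [Nonempty σ] {e x i j : ℕ} (hex : e ≤ x)
    (hF : Fut q f acc N e x) (hP : ¬P e x) (hij : i < j)
    (hj : j < x - e + Function.minimalPeriod shiftFut (Fut q f acc N e))
    (h : f^[i] (q e) = f^[j] (q e)) : False := by
  have h3 := Nat.le_mul_of_pos_right (Fintype.card σ) H.pos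
  have hc : 0 < Fintype.card σ := Fintype.card_pos
  -- A repetition in the run yields a period of the future.
  have hper : Function.IsPeriodicPt shiftFut (j - i) (Fut q f acc N e) := by
    change shiftFut^[j - i] _ = _
    rw [shiftFut_iterate]
    funext z
    apply propext
    have h4 := Nat.le_mul_of_pos_right (e + i + Fintype.card σ) H.pos
    rw [← H.fut_add_mul e _ (e + i + Fintype.card σ),
      ← H.fut_add_mul e z (e + i + Fintype.card σ),
      ← H.iff_fut (by omega), ← H.iff_fut (by omega), H.step _ _ (by omega),
      H.step _ _ (by omega)]
    rw [show z + (j - i) + (e + i + Fintype.card σ) * N - e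
      = (z + (e + i + Fintype.card σ) * N - e) + (j - i) * 1 by omega,
      iterate_add_mul f (q e) hij h (by omega) 1]
  have hle := hper.minimalPeriod_le (by omega)
  have hi : i < x - e := by omega
  apply hP
  rw [H.step _ _ (by omega), ← iterate_add_mul f (q e) hij h hi.le (Fintype.card σ * N)]
  have h5 : Fintype.card σ * N ≤ (j - i) * (Fintype.card σ * N) :=
    Nat.le_mul_of_pos_left _ (by omega)
  have h6 : Fut q f acc N e (x + (j - i) * (Fintype.card σ * N)) := by
    rw [← mul_assoc, H.fut_add_mul]; exact hF
  rw [← H.iff_fut (by omega), H.step _ _ (by omega)] at h6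
  rw [show x - e + (j - i) * (Fintype.card σ * N)
    = x + (j - i) * (Fintype.card σ * N) - e by omega]
  exact h6

/-- Weighted count of an antichain `X` of elements `x` with `P x (x + N)`: each element receives
`N` pairs (residue in its future, state), and no pair is used twice.

An element `x` whose future has least period `ℓ` receives the pairs formed by the `N / ℓ`
residues congruent to `x` modulo `ℓ` and the `ℓ` states visited at the times in `[x, x + ℓ)`
by the run of the least element `e` of `X` with the same future as `x`. -/
lemma exists_slots (H : Upward P q f acc t N) [Nonempty σ] (X : Finset ℕ)
    (hX : ∀ x ∈ X, t ≤ x ∧ P x (x + N)) (hanti : ∀ x ∈ X, ∀ y ∈ X, ¬P x y) :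
    ∃ U : Finset (ℕ × ℕ), U.card = X.card * N ∧
      ∀ u ∈ U, u.1 < N ∧ u.2 < Fintype.card σ ∧ ∃ x ∈ X, Fut q f acc N x u.1 := by
  classical
  let F := Fut q f acc N
  let per : ℕ → ℕ := fun x => Function.minimalPeriod shiftFut (F x)
  have hper_dvd : ∀ x, per x ∣ N := fun x => (H.isPeriodicPt x).minimalPeriod_dvd
  have hper_pos : ∀ x, 0 < per x := fun x => Nat.pos_of_dvd_of_pos (hper_dvd x) H.pos
  have hFper : ∀ x z m, F x (z + per x * m) ↔ F x z := by
    intro x z m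
    have h := (Function.isPeriodicPt_minimalPeriod shiftFut (F x)).mul_const m
    have h2 : shiftFut^[per x * m] (F x) = F x := h
    rw [shiftFut_iterate] at h2
    exact iff_of_eq (congrFun h2 z)
  have hFmod : ∀ x z z', z ≡ z' [MOD per x] → F x z → F x z' := by
    intro x z z' hz hF
    have h1 := hFper x (z % per x) (z / per x)
    have h2 := hFper x (z' % per x) (z' / per x)
    rw [Nat.mod_add_div] at h1 h2
    have hz' : z % per x = z' % per x := hz
    rw [h2, ← hz', ← h1]; exact hF
  have hex : ∀ x ∈ X, ∃ e, e ∈ X ∧ F e = F x ∧ ∀ e' ∈ X, F e' = F x → e ≤ e' := by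
    intro x hx
    have hne : (X.filter (fun e => F e = F x)).Nonempty := ⟨x, by simp [hx]⟩
    refine ⟨_, (Finset.mem_filter.1 (Finset.min'_mem _ hne)).1,
      (Finset.mem_filter.1 (Finset.min'_mem _ hne)).2, fun e' he' h => ?_⟩
    exact Finset.min'_le _ _ (by simp [he', h])
  choose! e heX heF hemin using hex
  let Φ : ℕ × ℕ → ℕ × ℕ := fun u =>
    ((u.1 + per u.1 * (u.2 / per u.1)) % N,
      (Fintype.equivFin σ (f^[u.1 - e u.1 + u.2 % per u.1] (q (e u.1)))).val)
  have hmodΦ : ∀ u : ℕ × ℕ, (Φ u).1 ≡ u.1 [MOD per u.1] := by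
    intro u
    have h1 : (Φ u).1 ≡ u.1 + per u.1 * (u.2 / per u.1) [MOD per u.1] :=
      (Nat.mod_modEq _ N).of_dvd (hper_dvd _)
    exact h1.trans (by simp [Nat.ModEq])
  refine ⟨(X ×ˢ Finset.range N).image Φ, ?_, ?_⟩
  · rw [Finset.card_image_of_injOn, Finset.card_product, Finset.card_range]
    rintro ⟨x, s⟩ hu ⟨x', s'⟩ hu' heq
    simp only [Finset.coe_product, Set.mem_prod, Finset.mem_coe, Finset.mem_range] at hu hu'
    obtain ⟨hx, hs⟩ := hu
    obtain ⟨hx', hs'⟩ := hu'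
    have hρ : (Φ (x, s)).1 = (Φ (x', s')).1 := by rw [heq]
    have hv : f^[x - e x + s % per x] (q (e x)) = f^[x' - e x' + s' % per x'] (q (e x')) := by
      have : (Φ (x, s)).2 = (Φ (x', s')).2 := by rw [heq]
      exact (Fintype.equivFin σ).injective (Fin.ext this)
    have hpereq : per x = per x' := by
      have h1 := congrArg (Function.minimalPeriod shiftFut) (H.shift_eq hv)
      rw [Function.minimalPeriod_apply_iterate ⟨N, H.pos, H.isPeriodicPt _⟩,
        Function.minimalPeriod_apply_iterate ⟨N, H.pos, H.isPeriodicPt _⟩] at h1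
      change Function.minimalPeriod shiftFut (F _) = Function.minimalPeriod shiftFut (F _) at h1
      rw [heF x hx, heF x' hx'] at h1
      exact h1
    have hmod : x ≡ x' [MOD per x] := by
      have h1 := hmodΦ (x, s)
      have h2 := hmodΦ (x', s')
      rw [← hρ] at h2
      simp only at h1 h2
      rw [← hpereq] at h2
      exact h1.symm.trans h2
    -- Each of `x`, `x'` is in the future of the other, so the futures coincide.
    have hFx := H.fut_self (hX x hx).2
    have hFx' := H.fut_self (hX x' hx').2
    have hxx' : F x x' := hFmod x x x' hmod hFx
    have hx'x : F x' x := hFmod x' x' x (hpereq ▸ hmod.symm) hFx'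
    have hFF : F x = F x' := by
      funext z
      exact propext ⟨H.fut_trans (hX x hx).1 hx'x, H.fut_trans (hX x' hx').1 hxx'⟩
    have hee : e x = e x' := by
      apply le_antisymm
      · exact hemin x hx _ (heX x' hx') ((heF x' hx').trans hFF.symm)
      · exact hemin x' hx' _ (heX x hx) ((heF x hx).trans hFF)
    have hlx : e x ≤ x := hemin x hx x hx rfl
    have hlx' : e x ≤ x' := hee ▸ hemin x' hx' x' hx' rfl
    rw [← hee, ← hpereq] at hv
    have hmx := Nat.mod_lt s (hper_pos x)
    have hmx' := Nat.mod_lt s' (hper_pos x)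
    have hperE : Function.minimalPeriod shiftFut (Fut q f acc N (e x)) = per x := by
      change Function.minimalPeriod shiftFut (F (e x)) = _
      rw [heF x hx]
    have hab : x - e x + s % per x = x' - e x + s' % per x := by
      rcases lt_trichotomy (x - e x + s % per x) (x' - e x + s' % per x) with hl | hl | hl
      · exfalso
        refine H.run_injective hlx' (x := x') ?_ (hanti _ (heX x hx) _ hx') hl ?_ hv
        · change F (e x) x'
          rw [heF x hx]; exact hxx'
        · rw [hperE]; omega
      · exact hl
      · exfalso
        refine H.run_injective hlx (x := x) ?_ (hanti _ (heX x hx) _ hx) hl ?_ hv.symm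
        · change F (e x) x
          rw [heF x hx]; exact hFx
        · rw [hperE]; omega
    have hxx : x = x' := by
      rcases le_total x x' with hl | hl
      · have h1 := (Nat.modEq_iff_dvd' hl).1 hmod
        have h2 := Nat.eq_zero_of_dvd_of_lt h1 (by omega)
        omega
      · have h1 := (Nat.modEq_iff_dvd' hl).1 hmod.symm
        have h2 := Nat.eq_zero_of_dvd_of_lt h1 (by omega)
        omega
    subst hxx
    have hsm : s % per x = s' % per x := by omega
    have h1 := Nat.mod_add_div s (per x)
    have h2 := Nat.mod_add_div s' (per x)
    have h3 : x + per x * (s / per x) ≡ x + per x * (s' / per x) [MOD N] := hρ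
    have h4 := Nat.ModEq.add_left_cancel' x h3
    have h5 := h4.eq_of_lt_of_lt (by omega) (by omega)
    have : s = s' := by omega
    rw [this]
  · intro u hu
    obtain ⟨⟨x, s⟩, hxs, rfl⟩ := Finset.mem_image.1 hu
    obtain ⟨hx, hs⟩ := Finset.mem_product.1 hxs
    refine ⟨Nat.mod_lt _ H.pos, Fin.is_lt _, x, hx, ?_⟩
    exact hFmod x x _ (hmodΦ (x, s)).symm (H.fut_self (hX x hx).2)

end Upward

/-! ### Runs of the automaton on encodings -/

lemma encPair_of_lt {x y : ℕ} (h : x < y) :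
    encPair x y = List.replicate x 0 ++ List.replicate (y - x) 2 := by
  apply List.ext_getElem
  · simp [encPair]; omega
  · intro i h1 h2
    simp only [encPair, List.getElem_map, List.getElem_range, List.getElem_append,
      List.length_replicate, List.getElem_replicate]
    split_ifs <;> first | rfl | omega

lemma encPair_of_gt {x y : ℕ} (h : x < y) :
    encPair y x = List.replicate x 0 ++ List.replicate (y - x) 1 := by
  apply List.ext_getElem
  · simp [encPair]; omega
  · intro i h1 h2
    simp only [encPair, List.length_map, List.length_range] at h1
    simp only [encPair, List.getElem_map, List.getElem_range, List.getElem_append,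
      List.length_replicate, List.getElem_replicate]
    split_ifs <;> first | rfl | omega

lemma evalFrom_replicate {σ : Type*} (M : DFA (Fin 3) σ) (a : Fin 3) (d : ℕ) (s : σ) :
    M.evalFrom s (List.replicate d a) = (fun v => M.step v a)^[d] s := by
  induction d generalizing s with
  | zero => rfl
  | succ d ih =>
    rw [List.replicate_succ, DFA.evalFrom_cons, ih, Function.iterate_succ_apply]

lemma mem_accepts_replicate {σ : Type*} (M : DFA (Fin 3) σ) (a : Fin 3) (x d : ℕ) :
    (List.replicate x 0 ++ List.replicate d a) ∈ M.accepts ↔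
      (fun v => M.step v a)^[d] ((fun v => M.step v 0)^[x] M.start) ∈ M.accept := by
  rw [DFA.mem_accepts, DFA.eval, DFA.evalFrom_of_append, evalFrom_replicate, evalFrom_replicate]

/-! ### The bound -/

/-- Weighted count of elements of a window: a set contained in `[t, t + n)` whose elements each
receive `N` pairs (residue congruent to the element modulo `p`, position), no pair being used
twice. -/
lemma exists_window_slots {N p t n : ℕ} (hN : 0 < N) (hp : 0 < p) (hpN : p ∣ N) (X : Finset ℕ)
    (hX : ∀ x ∈ X, t ≤ x ∧ x < t + n) :
    ∃ U : Finset (ℕ × ℕ), U.card = X.card * N ∧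
      ∀ u ∈ U, u.1 < N ∧ u.2 < n + p ∧ ∃ x ∈ X, u.1 ≡ x [MOD p] := by
  let Φ : ℕ × ℕ → ℕ × ℕ := fun u => ((u.1 + p * (u.2 / p)) % N, u.1 - t + u.2 % p)
  have hmodΦ : ∀ u : ℕ × ℕ, (Φ u).1 ≡ u.1 [MOD p] := by
    intro u
    have h1 : (Φ u).1 ≡ u.1 + p * (u.2 / p) [MOD p] := (Nat.mod_modEq _ N).of_dvd hpN
    exact h1.trans (by simp [Nat.ModEq])
  refine ⟨(X ×ˢ Finset.range N).image Φ, ?_, ?_⟩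
  · rw [Finset.card_image_of_injOn, Finset.card_product, Finset.card_range]
    rintro ⟨x, s⟩ hu ⟨x', s'⟩ hu' heq
    simp only [Finset.coe_product, Set.mem_prod, Finset.mem_coe, Finset.mem_range] at hu hu'
    obtain ⟨hx, hs⟩ := hu
    obtain ⟨hx', hs'⟩ := hu'
    have hρ : (Φ (x, s)).1 = (Φ (x', s')).1 := by rw [heq]
    have hv : x - t + s % p = x' - t + s' % p := by
      have : (Φ (x, s)).2 = (Φ (x', s')).2 := by rw [heq]
      exact this
    have hmod : x ≡ x' [MOD p] := by
      have h1 := hmodΦ (x, s)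
      have h2 := hmodΦ (x', s')
      rw [← hρ] at h2
      exact h1.symm.trans h2
    have hmx := Nat.mod_lt s hp
    have hmx' := Nat.mod_lt s' hp
    have hb := hX x hx
    have hb' := hX x' hx'
    have hxx : x = x' := by
      rcases le_total x x' with hl | hl
      · have h1 := (Nat.modEq_iff_dvd' hl).1 hmod
        have h2 := Nat.eq_zero_of_dvd_of_lt h1 (by omega)
        omega
      · have h1 := (Nat.modEq_iff_dvd' hl).1 hmod.symm
        have h2 := Nat.eq_zero_of_dvd_of_lt h1 (by omega)
        omega
    subst hxx
    have hsm : s % p = s' % p := by omega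
    have h1 := Nat.mod_add_div s p
    have h2 := Nat.mod_add_div s' p
    have h3 : x + p * (s / p) ≡ x + p * (s' / p) [MOD N] := hρ
    have h4 := Nat.ModEq.add_left_cancel' x h3
    have h5 := h4.eq_of_lt_of_lt (by omega) (by omega)
    have : s = s' := by omega
    rw [this]
  · intro u hu
    obtain ⟨⟨x, s⟩, hxs, rfl⟩ := Finset.mem_image.1 hu
    obtain ⟨hx, hs⟩ := Finset.mem_product.1 hxs
    refine ⟨Nat.mod_lt _ hN, ?_, x, hx, hmodΦ (x, s)⟩
    have := hX x hx
    have := Nat.mod_lt s hp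
    simp only [Φ]
    omega

theorem antichain_bound {σ : Type*} [Fintype σ]
    (M : DFA (Fin 3) σ) (h : IsOrderRel (recognizedRel M))
    (hnoinf : ¬∃ A : Set ℕ, A.Infinite ∧ IsAntichainOf (recognizedRel M) A) :
    ∀ A : Set ℕ, IsAntichainOf (recognizedRel M) A →
      A.Finite ∧ A.ncard ≤ 2 * Fintype.card σ + 2 := by
  classical
  intro A hA
  have hfin : A.Finite := by
    by_contra hinf
    exact hnoinf ⟨A, hinf, hA⟩
  refine ⟨hfin, ?_⟩
  have : Nonempty σ := ⟨M.start⟩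
  set P := recognizedRel M with hPdef
  set n := Fintype.card σ with hn
  set N := n.factorial with hN
  let q : ℕ → σ := fun x => (fun v => M.step v 0)^[x] M.start
  have hirr : ∀ x, ¬P x x := fun x hx => h.2 ⟨x, x, hx, hx⟩
  obtain ⟨t, j, htj, hjn, hq⟩ := exists_iterate_eq (fun v => M.step v 0) M.start
  obtain ⟨p, rfl⟩ := Nat.exists_eq_add_of_lt htj
  have hqper : ∀ x, t ≤ x → ∀ m, q (x + (p + 1) * m) = q x := by
    intro x hx m
    have := iterate_add_mul _ _ htj hq hx m
    rwa [show t + p + 1 - t = p + 1 by omega] at this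
  have hpN : p + 1 ∣ N := Nat.dvd_factorial (by omega) (by omega)
  have hqN : ∀ x, t ≤ x → q (x + N) = q x := by
    intro x hx
    obtain ⟨m, hm⟩ := hpN
    rw [hm]; exact hqper x hx m
  have H1 : Upward P q (fun v => M.step v 2) M.accept t N :=
    { trans := h.1
      irrefl := hirr
      step := fun x y hxy => by
        change encPair x y ∈ M.accepts ↔ _
        rw [encPair_of_lt hxy, mem_accepts_replicate]
      per := hqN
      iter := fun v d hd => iterate_add_factorial _ v hd
      card_le := Nat.self_le_factorial _
      pos := Nat.factorial_pos _ }
  have H2 : Upward (fun x y => P y x) q (fun v => M.step v 1) M.accept t N :=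
    { trans := fun x y z hxy hyz => h.1 z y x hyz hxy
      irrefl := hirr
      step := fun x y hxy => by
        change encPair y x ∈ M.accepts ↔ _
        rw [encPair_of_gt hxy, mem_accepts_replicate]
      per := hqN
      iter := fun v d hd => iterate_add_factorial _ v hd
      card_le := Nat.self_le_factorial _
      pos := Nat.factorial_pos _ }
  have hNpos : 0 < N := Nat.factorial_pos _
  have hn1 : 0 < n := Fintype.card_pos
  -- A progression `z + ℕ N` whose consecutive terms are incomparable is an antichain.
  have hprog : ∀ z, t ≤ z → ¬P z (z + N) → ¬P (z + N) z →
      (∀ k, z + k * N ∈ supp P) → False := by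
    intro z hz h1 h2 hs
    apply hnoinf
    refine ⟨Set.range (fun k => z + k * N), ?_, ?_, ?_⟩
    · apply Set.infinite_range_of_injective
      intro a b hab
      exact Nat.eq_of_mul_eq_mul_right hNpos (by simpa using hab)
    · rintro _ ⟨k, rfl⟩; exact hs k
    · rintro _ ⟨k, rfl⟩ _ ⟨k', rfl⟩ hne
      rcases lt_trichotomy k k' with hl | hl | hl
      · exact ⟨fun hP => h1 (H1.rel_multiples hz hl hP),
          fun hP => h2 (H2.rel_multiples hz hl hP)⟩
      · exact absurd (by rw [hl]) hne
      · exact ⟨fun hP => h2 (H2.rel_multiples hz hl hP),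
          fun hP => h1 (H1.rel_multiples hz hl hP)⟩
  have hsupp : ∀ x y, t ≤ x → t ≤ y → P x y → ∀ k, P (x + k * N) (y + k * N) := by
    intro x y hx hy hP k
    rcases lt_trichotomy x y with hl | hl | hl
    · exact (H1.rel_shift hx hl k).2 hP
    · subst hl; exact absurd hP (hirr x)
    · exact (H2.rel_shift hy hl k).2 hP
  let X : Finset ℕ := hfin.toFinset
  have hXA : ∀ x, x ∈ X ↔ x ∈ A := fun x => hfin.mem_toFinset
  have hanti : ∀ x ∈ X, ∀ y ∈ X, ¬P x y := by
    intro x hx y hy hP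
    by_cases hxy : x = y
    · subst hxy; exact hirr x hP
    · exact (hA.2 x ((hXA x).1 hx) y ((hXA y).1 hy) hxy).1 hP
  let X0 := X.filter (fun x => x < t)
  let Y := X.filter (fun x => ¬x < t)
  let X1 := Y.filter (fun x => P x (x + N))
  let Y1 := Y.filter (fun x => ¬P x (x + N))
  let X2 := Y1.filter (fun x => P (x + N) x)
  let X3 := Y1.filter (fun x => ¬P (x + N) x)
  have hc0 : X0.card + Y.card = X.card := Finset.card_filter_add_card_filter_not _
  have hc1 : X1.card + Y1.card = Y.card := Finset.card_filter_add_card_filter_not _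
  have hc2 : X2.card + X3.card = Y1.card := Finset.card_filter_add_card_filter_not _
  have hX0 : X0.card ≤ t := by
    have : X0 ⊆ Finset.range t := fun x hx => by
      simpa using (Finset.mem_filter.1 hx).2
    simpa using Finset.card_le_card this
  have hX1 : ∀ x ∈ X1, x ∈ X ∧ t ≤ x ∧ P x (x + N) := by
    intro x hx
    simp only [X1, Y, Finset.mem_filter] at hx
    exact ⟨hx.1.1, by omega, hx.2⟩
  have hX2 : ∀ x ∈ X2, x ∈ X ∧ t ≤ x ∧ P (x + N) x := by
    intro x hx
    simp only [X2, Y1, Y, Finset.mem_filter] at hx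
    exact ⟨hx.1.1.1, by omega, hx.2⟩
  have hX3 : ∀ x ∈ X3, x ∈ X ∧ t ≤ x ∧ ¬P x (x + N) ∧ ¬P (x + N) x := by
    intro x hx
    simp only [X3, Y1, Y, Finset.mem_filter] at hx
    exact ⟨hx.1.1.1, by omega, hx.1.2, hx.2⟩
  -- Elements of `X3` are comparable only with elements below `t` at distance less than `n`.
  have hX3b : ∀ x ∈ X3, t ≤ x ∧ x < t + n := by
    intro x hx
    obtain ⟨hxX, htx, hi1, hi2⟩ := hX3 x hx
    refine ⟨htx, ?_⟩
    by_contra hlt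
    apply hprog x htx hi1 hi2
    obtain ⟨y, hy⟩ := hA.1 ((hXA x).1 hxX)
    intro k
    by_cases hyt : t ≤ y
    · refine ⟨y + k * N, ?_⟩
      rcases hy with hy | hy
      · exact Or.inl (hsupp x y htx hyt hy k)
      · exact Or.inr (hsupp y x hyt htx hy k)
    · refine ⟨y, ?_⟩
      rcases hy with hy | hy
      · left
        rw [show P x y ↔ _ from H2.iff_fut (x := y) (y := x) (by omega)] at hy
        rw [show P (x + k * N) y ↔ _ from H2.iff_fut (x := y) (y := x + k * N) (by omega)]
        exact (H2.fut_add_mul _ _ _).2 hy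
      · right
        rw [H1.iff_fut (by omega)] at hy ⊢
        exact (H1.fut_add_mul _ _ _).2 hy
  obtain ⟨U1, hU1c, hU1⟩ := H1.exists_slots X1 (fun x hx => (hX1 x hx).2)
    (fun x hx y hy => hanti x (hX1 x hx).1 y (hX1 y hy).1)
  obtain ⟨U2, hU2c, hU2⟩ := H2.exists_slots X2 (fun x hx => (hX2 x hx).2)
    (fun x hx y hy => hanti y (hX2 y hy).1 x (hX2 x hx).1)
  obtain ⟨U3, hU3c, hU3⟩ := exists_window_slots hNpos (Nat.succ_pos p) hpN X3 hX3b
  -- A time in the future of `x` and in the past of `y` would give `P x y`.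
  have hd12 : Disjoint U1 U2 := by
    rw [Finset.disjoint_left]
    intro u hu hu'
    obtain ⟨-, -, x, hx, hF⟩ := hU1 u hu
    obtain ⟨-, -, y, hy, hG⟩ := hU2 u hu'
    have h1 := H1.rel_of_fut hF (k := x + y + n) (by omega)
    have h2 := H2.rel_of_fut hG (k := x + y + n) (by omega)
    exact hanti x (hX1 x hx).1 y (hX2 y hy).1 (h.1 _ _ _ h1 h2)
  -- A late `z` congruent to an element of `X3` modulo the period of `q` is again incomparable
  -- with `z + N`, so it cannot be comparable with any element from `t` on.
  have hcong : ∀ x ∈ X3, ∀ ρ, ρ ≡ x [MOD (p + 1)] → ∀ k, x ≤ k → ∀ w, t ≤ w →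
      ¬(P w (ρ + k * N) ∨ P (ρ + k * N) w) := by
    intro x hx ρ hρ k hk w hw hP
    obtain ⟨hxX, htx, hi1, hi2⟩ := hX3 x hx
    have hkN := Nat.le_mul_of_pos_right k hNpos
    have hle : x ≤ ρ + k * N := by omega
    have hmod : x ≡ ρ + k * N [MOD (p + 1)] := by
      have h0 : k * N ≡ 0 [MOD (p + 1)] := (Nat.modEq_zero_iff_dvd).2 (hpN.mul_left k)
      exact (hρ.add h0).symm
    obtain ⟨m, hm⟩ := (Nat.modEq_iff_dvd' hle).1 hmod
    have hz : ρ + k * N = x + (p + 1) * m := by omega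
    have hqz : q (ρ + k * N) = q x := by rw [hz]; exact hqper x htx m
    apply hprog (ρ + k * N) (by omega)
    · rw [H1.step _ _ (by omega), hqz]
      rw [H1.step _ _ (by omega)] at hi1
      simpa using hi1
    · intro hc
      apply hi2
      have hc' := (H2.step (ρ + k * N) (ρ + k * N + N) (by omega)).1 hc
      refine (H2.step x (x + N) (by omega)).2 ?_
      rw [hqz] at hc'
      simpa using hc'
    · intro i
      refine ⟨w + i * N, ?_⟩
      rcases hP with hP | hP
      · exact Or.inr (hsupp _ _ hw (by omega) hP i)
      · exact Or.inl (hsupp _ _ (by omega) hw hP i)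
  have hd13 : Disjoint U1 U3 := by
    rw [Finset.disjoint_left]
    intro u hu hu'
    obtain ⟨-, -, w, hw, hF⟩ := hU1 u hu
    obtain ⟨-, -, x, hx, hρ⟩ := hU3 u hu'
    exact hcong x hx _ hρ (x + w + n) (by omega) w (hX1 w hw).2.1
      (Or.inl (H1.rel_of_fut hF (by omega)))
  have hd23 : Disjoint U2 U3 := by
    rw [Finset.disjoint_left]
    intro u hu hu'
    obtain ⟨-, -, w, hw, hF⟩ := hU2 u hu
    obtain ⟨-, -, x, hx, hρ⟩ := hU3 u hu'
    exact hcong x hx _ hρ (x + w + n) (by omega) w (hX2 w hw).2.1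
      (Or.inr (H2.rel_of_fut hF (by omega)))
  have hsub : (U1 ∪ U2) ∪ U3 ⊆ Finset.range N ×ˢ Finset.range (n + (p + 1)) := by
    intro u hu
    rw [Finset.mem_product, Finset.mem_range, Finset.mem_range]
    rcases Finset.mem_union.1 hu with hu | hu
    · rcases Finset.mem_union.1 hu with hu | hu
      · have := hU1 u hu
        exact ⟨this.1, by omega⟩
      · have := hU2 u hu
        exact ⟨this.1, by omega⟩
    · have := hU3 u hu
      exact ⟨this.1, this.2.1⟩
  have hcard := Finset.card_le_card hsub
  rw [Finset.card_union_of_disjoint (Finset.disjoint_union_left.2 ⟨hd13, hd23⟩),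
    Finset.card_union_of_disjoint hd12, hU1c, hU2c, hU3c, Finset.card_product,
    Finset.card_range, Finset.card_range, ← add_mul, ← add_mul, mul_comm N] at hcard
  have hle := Nat.le_of_mul_le_mul_right hcard hNpos
  rw [Set.ncard_eq_toFinset_card A hfin]
  change X.card ≤ _
  omega
end
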